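/- There exists a constant C depending only on m and δ such that for every measurable Z : ℝ² → ℂ: ‖ 1_{|k| ≥ μ}·⟨k⟩^m·min(|k|^{1/4},1)·|k|^{2/3}·|η − kt|·p^{−3/4}·Z ‖_{L²_k L¹_η} ≤ C·μ^{−1/3}·( D_{τα}^{1/2} + μ^{−δ}·D_α^{δ}·D_{τα}^{1/2−δ} ), where 1_{|k| ≥ μ} denotes the indicator function of the set {(k,η) : |k| ≥ μ}. -/

import Mathlib

open MeasureTheory Real
open scoped ENNReal NNReal

noncomputable section

/-- The Japanese bracket `⟨k⟩ = (1+k²)^{1/2}`. -/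
def jap (k : ℝ) : ℝ := Real.sqrt (1 + k ^ 2)

/-- The moving-frame symbol `p(k,η) = k² + (η − kt)²`. -/
def pw (t k η : ℝ) : ℝ := k ^ 2 + (η - k * t) ^ 2

/-- The weight `A(k)`. -/
def Aw (μ k : ℝ) : ℝ :=
  if |k| < μ then 1 else μ ^ ((1 : ℝ) / 3) * |k| ^ (-(1 : ℝ) / 3)

/-- The weight `B(k)`. -/
def Bw (μ k : ℝ) : ℝ :=
  if |k| < μ then μ ^ (-(1 : ℝ) / 2) else μ ^ ((1 : ℝ) / 6) * |k| ^ (-(2 : ℝ) / 3)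

/-- Weighted `L¹(ℝ²)` norm `‖w·Z‖_{L¹}` (iterated, value in `[0,∞]`). -/
def L1n (w : ℝ → ℝ → ℝ) (Z : ℝ × ℝ → ℂ) : ℝ≥0∞ :=
  ∫⁻ k : ℝ, ∫⁻ η : ℝ, ENNReal.ofReal (w k η) * (‖Z (k, η)‖₊ : ℝ≥0∞)

/-- Weighted `L²(ℝ²)` norm `‖w·Z‖_{L²}` (value in `[0,∞]`). -/
def L2n (w : ℝ → ℝ → ℝ) (Z : ℝ × ℝ → ℂ) : ℝ≥0∞ :=
  (∫⁻ k : ℝ, ∫⁻ η : ℝ,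
      (ENNReal.ofReal (w k η) * (‖Z (k, η)‖₊ : ℝ≥0∞)) ^ 2) ^ ((1 : ℝ) / 2)

/-- Weighted mixed norm `‖w·Z‖_{L²_k L¹_η}` (value in `[0,∞]`). -/
def L2L1n (w : ℝ → ℝ → ℝ) (Z : ℝ × ℝ → ℂ) : ℝ≥0∞ :=
  (∫⁻ k : ℝ,
      (∫⁻ η : ℝ, ENNReal.ofReal (w k η) * (‖Z (k, η)‖₊ : ℝ≥0∞)) ^ 2) ^ ((1 : ℝ) / 2)

/-- The energy `E = ‖⟨k⟩^m Z‖_{L²} + ‖⟨k⟩^m A(k)(η−kt) Z‖_{L²}`. -/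
def En (t μ m : ℝ) (Z : ℝ × ℝ → ℂ) : ℝ≥0∞ :=
  L2n (fun k _ => jap k ^ m) Z + L2n (fun k η => jap k ^ m * Aw μ k * |η - k * t|) Z

/-- The dissipation `D_γ = μ·∬ ⟨k⟩^{2m} p |Z|²`. -/
def Dg (t μ m : ℝ) (Z : ℝ × ℝ → ℂ) : ℝ≥0∞ :=
  ENNReal.ofReal μ * ∫⁻ k : ℝ, ∫⁻ η : ℝ,
    ENNReal.ofReal (jap k ^ (2 * m) * pw t k η) * (‖Z (k, η)‖₊ : ℝ≥0∞) ^ 2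

/-- The dissipation `D_τ = ∬ ⟨k⟩^{2m} k² p⁻¹ |Z|²`. -/
def Dtau (t m : ℝ) (Z : ℝ × ℝ → ℂ) : ℝ≥0∞ :=
  ∫⁻ k : ℝ, ∫⁻ η : ℝ,
    ENNReal.ofReal (jap k ^ (2 * m) * k ^ 2 / pw t k η) * (‖Z (k, η)‖₊ : ℝ≥0∞) ^ 2

/-- The dissipation `D_α = μ·∬ ⟨k⟩^{2m} A(k)² (η−kt)² p |Z|²`. -/
def Dal (t μ m : ℝ) (Z : ℝ × ℝ → ℂ) : ℝ≥0∞ :=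
  ENNReal.ofReal μ * ∫⁻ k : ℝ, ∫⁻ η : ℝ,
    ENNReal.ofReal (jap k ^ (2 * m) * Aw μ k ^ 2 * (η - k * t) ^ 2 * pw t k η)
      * (‖Z (k, η)‖₊ : ℝ≥0∞) ^ 2

/-- The dissipation `D_{τα} = ∬ ⟨k⟩^{2m} A(k)² k² (η−kt)² p⁻¹ |Z|²`. -/
def Dta (t μ m : ℝ) (Z : ℝ × ℝ → ℂ) : ℝ≥0∞ :=
  ∫⁻ k : ℝ, ∫⁻ η : ℝ,
    ENNReal.ofReal (jap k ^ (2 * m) * Aw μ k ^ 2 * k ^ 2 * (η - k * t) ^ 2 / pw t k η)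
      * (‖Z (k, η)‖₊ : ℝ≥0∞) ^ 2

/-- The dissipation `D_β = ∬ ⟨k⟩^{2m} B(k)² k² |Z|²`. -/
def Db (t μ m : ℝ) (Z : ℝ × ℝ → ℂ) : ℝ≥0∞ :=
  ∫⁻ k : ℝ, ∫⁻ η : ℝ,
    ENNReal.ofReal (jap k ^ (2 * m) * Bw μ k ^ 2 * k ^ 2) * (‖Z (k, η)‖₊ : ℝ≥0∞) ^ 2

/- Let `f |Z|²` and `g |Z|²` be the densities of `D_{τα}` and `D_α / μ`. Since
`min(|k|^{1/4}, 1) ≤ |k|^{2δ}`, the weight on the left-hand side is at most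
`μ^{-1/3} · |k|^{4δ} p^{-(1+8δ)/4} · f^{1/2-δ} g^δ`. The substitution `η = k (x + t)` shows that the
`L²_η` norm of `|k|^{4δ} p^{-(1+8δ)/4}` is the same finite number for all `k ≠ 0`, so the estimate
follows from Cauchy–Schwarz in `η` and Hölder in `(k, η)` with weights `1 - 2δ` and `2δ`. -/

section HolderInequalities

variable {α β : Type*} [MeasurableSpace α] [MeasurableSpace β] {μ : Measure α} {ν : Measure β}
  [SFinite ν]

theorem lintegral_rpow_lintegral_mul_le {p q : ℝ} (hpq : p.HolderConjugate q)
    {φ h : α → β → ℝ≥0∞} (hφ : ∀ a, AEMeasurable (φ a) ν)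
    (hh : Measurable (Function.uncurry h)) {M : ℝ≥0∞}
    (hM : ∀ᵐ a ∂μ, (∫⁻ b, φ a b ^ p ∂ν) ^ (1 / p) ≤ M) :
    (∫⁻ a, (∫⁻ b, φ a b * h a b ∂ν) ^ q ∂μ) ^ (1 / q)
      ≤ M * (∫⁻ a, ∫⁻ b, h a b ^ q ∂ν ∂μ) ^ (1 / q) := by
  have hq : 0 < q := hpq.symm.pos
  have hh_int : Measurable fun a => ∫⁻ b, h a b ^ q ∂ν :=
    (hh.pow_const q).lintegral_prod_right'
  have fiberwise : ∀ᵐ a ∂μ, (∫⁻ b, φ a b * h a b ∂ν) ^ q ≤ M ^ q * ∫⁻ b, h a b ^ q ∂ν := by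
    filter_upwards [hM] with a ha
    calc (∫⁻ b, φ a b * h a b ∂ν) ^ q
        ≤ ((∫⁻ b, φ a b ^ p ∂ν) ^ (1 / p) * (∫⁻ b, h a b ^ q ∂ν) ^ (1 / q)) ^ q := by
          gcongr
          exact ENNReal.lintegral_mul_le_Lp_mul_Lq ν hpq (hφ a)
            hh.of_uncurry_left.aemeasurable
      _ ≤ (M * (∫⁻ b, h a b ^ q ∂ν) ^ (1 / q)) ^ q := by gcongr
      _ = M ^ q * ∫⁻ b, h a b ^ q ∂ν := by
          rw [ENNReal.mul_rpow_of_nonneg _ _ hq.le, ← ENNReal.rpow_mul, one_div_mul_cancel hq.ne',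
            ENNReal.rpow_one]
  calc (∫⁻ a, (∫⁻ b, φ a b * h a b ∂ν) ^ q ∂μ) ^ (1 / q)
      ≤ (∫⁻ a, M ^ q * ∫⁻ b, h a b ^ q ∂ν ∂μ) ^ (1 / q) :=
        ENNReal.rpow_le_rpow (lintegral_mono_ae fiberwise) (by positivity)
    _ = M * (∫⁻ a, ∫⁻ b, h a b ^ q ∂ν ∂μ) ^ (1 / q) := by
        rw [lintegral_const_mul _ hh_int,
          ENNReal.mul_rpow_of_nonneg _ _ (by positivity), ← ENNReal.rpow_mul,
          mul_one_div_cancel hq.ne', ENNReal.rpow_one]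

theorem lintegral_lintegral_rpow_mul_rpow_le {f g : α → β → ℝ≥0∞}
    (hf : Measurable (Function.uncurry f)) (hg : Measurable (Function.uncurry g)) {p q : ℝ}
    (hp : 0 ≤ p) (hq : 0 ≤ q) (hpq : p + q = 1) :
    ∫⁻ a, ∫⁻ b, f a b ^ p * g a b ^ q ∂ν ∂μ
      ≤ (∫⁻ a, ∫⁻ b, f a b ∂ν ∂μ) ^ p * (∫⁻ a, ∫⁻ b, g a b ∂ν ∂μ) ^ q := by
  rw [lintegral_lintegral hf.aemeasurable, lintegral_lintegral hg.aemeasurable,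
    lintegral_lintegral ((hf.pow_const p).mul (hg.pow_const q)).aemeasurable]
  exact ENNReal.lintegral_mul_norm_pow_le hf.aemeasurable hg.aemeasurable hp hq hpq

end HolderInequalities

/-- The density `w |Z|²` of the quadratic functionals `D_{τα}` and `D_α`, valued in `[0,∞]`. -/
def quadDensity (w : ℝ → ℝ → ℝ) (Z : ℝ × ℝ → ℂ) (k η : ℝ) : ℝ≥0∞ :=
  ENNReal.ofReal (w k η) * (‖Z (k, η)‖₊ : ℝ≥0∞) ^ 2

theorem measurable_uncurry_quadDensity {w : ℝ → ℝ → ℝ} {Z : ℝ × ℝ → ℂ}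
    (hw : Measurable (Function.uncurry w)) (hZ : Measurable Z) :
    Measurable (Function.uncurry (quadDensity w Z)) :=
  hw.ennreal_ofReal.mul (hZ.nnnorm.coe_nnreal_ennreal.pow_const 2)

theorem quadDensity_rpow_mul_rpow {f g : ℝ → ℝ → ℝ} {k η : ℝ} (hf : 0 ≤ f k η) (hg : 0 ≤ g k η)
    {p q : ℝ} (hp : 0 ≤ p) (hq : 0 ≤ q) (hpq : p + q = 1 / 2) (Z : ℝ × ℝ → ℂ) :
    quadDensity f Z k η ^ p * quadDensity g Z k η ^ q
      = ENNReal.ofReal (f k η ^ p * g k η ^ q) * (‖Z (k, η)‖₊ : ℝ≥0∞) := by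
  have hz (z : ℝ≥0∞) : (z ^ 2) ^ p * (z ^ 2) ^ q = z := by
    rw [← ENNReal.rpow_add_of_nonneg _ _ hp hq, hpq, ← ENNReal.rpow_two, ← ENNReal.rpow_mul]
    norm_num
  rw [quadDensity, quadDensity, ENNReal.mul_rpow_of_nonneg _ _ hp,
    ENNReal.mul_rpow_of_nonneg _ _ hq, mul_mul_mul_comm, hz,
    ENNReal.ofReal_rpow_of_nonneg hf hp, ENNReal.ofReal_rpow_of_nonneg hg hq,
    ENNReal.ofReal_mul (Real.rpow_nonneg hf p)]

theorem L2L1n_le_mul_lintegral_quadDensity_rpow {w φ f g : ℝ → ℝ → ℝ}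
    (hφ₀ : ∀ k η, 0 ≤ φ k η) (hf₀ : ∀ k η, 0 ≤ f k η) (hg₀ : ∀ k η, 0 ≤ g k η)
    (hφ : ∀ k, Measurable (φ k)) (hf : Measurable (Function.uncurry f))
    (hg : Measurable (Function.uncurry g)) {p q : ℝ} (hp : 0 ≤ p) (hq : 0 ≤ q)
    (hpq : p + q = 1 / 2) (hw : ∀ k η, w k η ≤ φ k η * (f k η ^ p * g k η ^ q)) {M : ℝ≥0∞}
    (hM : ∀ᵐ k, (∫⁻ η, ENNReal.ofReal (φ k η) ^ (2 : ℝ)) ^ ((1 : ℝ) / 2) ≤ M)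
    {Z : ℝ × ℝ → ℂ} (hZ : Measurable Z) :
    L2L1n w Z ≤ M * ((∫⁻ k, ∫⁻ η, quadDensity f Z k η) ^ p
      * (∫⁻ k, ∫⁻ η, quadDensity g Z k η) ^ q) := by
  have hF := measurable_uncurry_quadDensity hf hZ
  have hG := measurable_uncurry_quadDensity hg hZ
  set F := quadDensity f Z
  set G := quadDensity g Z
  have pointwise (k η : ℝ) : ENNReal.ofReal (w k η) * (‖Z (k, η)‖₊ : ℝ≥0∞)
      ≤ ENNReal.ofReal (φ k η) * (F k η ^ p * G k η ^ q) := by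
    rw [quadDensity_rpow_mul_rpow (hf₀ k η) (hg₀ k η) hp hq hpq, ← mul_assoc,
      ← ENNReal.ofReal_mul (hφ₀ k η)]
    gcongr
    exact hw k η
  have sq_rpow (k η : ℝ) :
      (F k η ^ p * G k η ^ q) ^ (2 : ℝ) = F k η ^ (p * 2) * G k η ^ (q * 2) := by
    rw [ENNReal.mul_rpow_of_nonneg _ _ zero_le_two, ← ENNReal.rpow_mul, ← ENNReal.rpow_mul]
  calc L2L1n w Z
      ≤ (∫⁻ k, (∫⁻ η, ENNReal.ofReal (φ k η) * (F k η ^ p * G k η ^ q)) ^ (2 : ℝ))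
          ^ ((1 : ℝ) / 2) := by
        simp only [L2L1n, ENNReal.rpow_two]
        gcongr (∫⁻ k, (∫⁻ η, ?_) ^ 2) ^ _ with k η
        exact pointwise k η
    _ ≤ M * (∫⁻ k, ∫⁻ η, F k η ^ (p * 2) * G k η ^ (q * 2)) ^ ((1 : ℝ) / 2) := by
        simp only [← sq_rpow]
        exact lintegral_rpow_lintegral_mul_le Real.HolderConjugate.two_two
          (h := fun k η => F k η ^ p * G k η ^ q)
          (fun k => (hφ k).ennreal_ofReal.aemeasurable)
          ((hF.pow_const p).mul (hG.pow_const q)) hM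
    _ ≤ M * ((∫⁻ k, ∫⁻ η, F k η) ^ (p * 2) * (∫⁻ k, ∫⁻ η, G k η) ^ (q * 2))
          ^ ((1 : ℝ) / 2) := by
        gcongr
        exact lintegral_lintegral_rpow_mul_rpow_le hF hG (by positivity) (by positivity)
          (by linarith)
    _ = M * ((∫⁻ k, ∫⁻ η, F k η) ^ p * (∫⁻ k, ∫⁻ η, G k η) ^ q) := by
        rw [ENNReal.mul_rpow_of_nonneg _ _ one_half_pos.le, ← ENNReal.rpow_mul,
          ← ENNReal.rpow_mul, mul_assoc p, mul_assoc q, mul_one_div_cancel two_ne_zero, mul_one,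
          mul_one]

theorem lintegral_eq_ofReal_abs_mul_lintegral_comp_mul_add {a : ℝ} (ha : a ≠ 0) (b : ℝ)
    (f : ℝ → ℝ≥0∞) : ∫⁻ y, f y = ENNReal.ofReal |a| * ∫⁻ x, f (a * x + b) := by
  rw [← lintegral_add_right_eq_self f b]
  conv_lhs => rw [← Real.smul_map_volume_mul_left ha]
  rw [lintegral_smul_measure, smul_eq_mul]
  exact congrArg _
    ((Homeomorph.mulLeft₀ a ha).measurableEmbedding.lintegral_map fun y => f (y + b))

theorem jap_pos (k : ℝ) : 0 < jap k := Real.sqrt_pos.mpr (by positivity)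

theorem pw_nonneg (t k η : ℝ) : 0 ≤ pw t k η := by unfold pw; positivity

theorem pw_pos {k : ℝ} (hk : k ≠ 0) (t η : ℝ) : 0 < pw t k η := by unfold pw; positivity

theorem Aw_nonneg {μ : ℝ} (hμ : 0 ≤ μ) (k : ℝ) : 0 ≤ Aw μ k := by
  unfold Aw; split_ifs <;> positivity

theorem measurable_jap : Measurable jap := by unfold jap; fun_prop

theorem measurable_uncurry_pw (t : ℝ) : Measurable (Function.uncurry (pw t)) := by
  unfold pw Function.uncurry; fun_prop

theorem measurable_Aw (μ : ℝ) : Measurable (Aw μ) :=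
  Measurable.ite (measurableSet_lt (by fun_prop) (by fun_prop)) (by fun_prop) (by fun_prop)

theorem pw_mul_add (t k x : ℝ) : pw t k (k * x + k * t) = (|k| * jap x) ^ 2 := by
  rw [pw, jap, mul_pow, sq_abs, Real.sq_sqrt (by positivity)]
  ring

theorem lintegral_jap_rpow_neg_lt_top {s : ℝ} (hs : 1 < s) :
    ∫⁻ x, ENNReal.ofReal (jap x ^ (-s)) < ∞ := by
  have hint : Integrable (fun x : ℝ => (1 + ‖x‖ ^ 2) ^ (-s / 2)) :=
    integrable_rpow_neg_one_add_norm_sq (by simpa using hs)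
  refine (lintegral_congr fun x => ?_).trans_lt hint.lintegral_lt_top
  rw [jap, Real.sqrt_eq_rpow, ← Real.rpow_mul (by positivity), Real.norm_eq_abs, sq_abs]
  ring_nf

/-- The factor `|k|^{(s-1)/2} p^{-s/4}` that is integrated in `L²_η`; the power of `|k|` makes its
`L²_η` norm independent of `k ≠ 0`. -/
def pwKernel (s t k η : ℝ) : ℝ := |k| ^ ((s - 1) / 2) * pw t k η ^ (-s / 4)

theorem pwKernel_nonneg (s t k η : ℝ) : 0 ≤ pwKernel s t k η :=
  mul_nonneg (by positivity) (Real.rpow_nonneg (pw_nonneg t k η) _)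

theorem measurable_pwKernel (s t k : ℝ) : Measurable (pwKernel s t k) :=
  ((measurable_uncurry_pw t).of_uncurry_left.pow_const _).const_mul _

theorem pwKernel_mul_add_sq {k : ℝ} (hk : k ≠ 0) (s t x : ℝ) :
    pwKernel s t k (k * x + k * t) ^ 2 = |k|⁻¹ * jap x ^ (-s) := by
  have hκ : 0 < |k| := abs_pos.mpr hk
  have hj := jap_pos x
  rw [pwKernel, pw_mul_add, mul_pow, ← Real.rpow_natCast, ← Real.rpow_natCast,
    ← Real.rpow_natCast, ← Real.rpow_mul hκ.le, ← Real.rpow_mul (by positivity),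
    ← Real.rpow_mul (by positivity), Real.mul_rpow hκ.le hj.le, ← mul_assoc, ← Real.rpow_add hκ,
    ← Real.rpow_neg_one]
  congr 2 <;> push_cast <;> ring

theorem lintegral_pwKernel_rpow_two {k : ℝ} (hk : k ≠ 0) (s t : ℝ) :
    ∫⁻ η, ENNReal.ofReal (pwKernel s t k η) ^ (2 : ℝ)
      = ∫⁻ x, ENNReal.ofReal (jap x ^ (-s)) := by
  have hκ : |k| ≠ 0 := abs_ne_zero.mpr hk
  rw [lintegral_eq_ofReal_abs_mul_lintegral_comp_mul_add hk (k * t),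
    ← lintegral_const_mul' _ _ ENNReal.ofReal_ne_top]
  refine lintegral_congr fun x => ?_
  rw [ENNReal.rpow_two, ← ENNReal.ofReal_pow (pwKernel_nonneg _ _ _ _), pwKernel_mul_add_sq hk,
    ← ENNReal.ofReal_mul (abs_nonneg k), mul_inv_cancel_left₀ hκ]

theorem lintegral_ofReal_mul_pwKernel_rpow_two {c k : ℝ} (hc : 0 ≤ c) (hk : k ≠ 0) (s t : ℝ) :
    (∫⁻ η, ENNReal.ofReal (c * pwKernel s t k η) ^ (2 : ℝ)) ^ ((1 : ℝ) / 2)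
      = ENNReal.ofReal c * (∫⁻ x, ENNReal.ofReal (jap x ^ (-s))) ^ ((1 : ℝ) / 2) := by
  simp only [ENNReal.ofReal_mul hc, ENNReal.mul_rpow_of_nonneg _ _ zero_le_two]
  rw [lintegral_const_mul' _ _ (by simp), lintegral_pwKernel_rpow_two hk,
    ENNReal.mul_rpow_of_nonneg _ _ one_half_pos.le, ← ENNReal.rpow_mul,
    mul_one_div_cancel two_ne_zero, ENNReal.rpow_one]

/-- The weight of the mixed norm to be estimated, including the cut-off `|k| ≥ μ`. -/
def highFreqWeight (t μ m k η : ℝ) : ℝ :=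
  (if μ ≤ |k| then 1 else 0) * jap k ^ m * min (|k| ^ ((1 : ℝ) / 4)) 1
    * |k| ^ ((2 : ℝ) / 3) * |η - k * t| * pw t k η ^ (-(3 : ℝ) / 4)

/-- The weight of `D_{τα}`. -/
def dtaWeight (t μ m k η : ℝ) : ℝ :=
  jap k ^ (2 * m) * Aw μ k ^ 2 * k ^ 2 * (η - k * t) ^ 2 / pw t k η

/-- The weight of `D_α`, without the prefactor `μ`. -/
def dalWeight (t μ m k η : ℝ) : ℝ :=
  jap k ^ (2 * m) * Aw μ k ^ 2 * (η - k * t) ^ 2 * pw t k η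

theorem dtaWeight_nonneg (t μ m k η : ℝ) : 0 ≤ dtaWeight t μ m k η := by
  have := jap_pos k
  have := pw_nonneg t k η
  unfold dtaWeight; positivity

theorem dalWeight_nonneg (t μ m k η : ℝ) : 0 ≤ dalWeight t μ m k η := by
  have := jap_pos k
  have := pw_nonneg t k η
  unfold dalWeight; positivity

theorem measurable_uncurry_dtaWeight (t μ m : ℝ) :
    Measurable (Function.uncurry (dtaWeight t μ m)) := by
  have := measurable_jap
  have := measurable_Aw μ
  have := measurable_uncurry_pw t
  unfold dtaWeight Function.uncurry at *
  fun_prop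

theorem measurable_uncurry_dalWeight (t μ m : ℝ) :
    Measurable (Function.uncurry (dalWeight t μ m)) := by
  have := measurable_jap
  have := measurable_Aw μ
  have := measurable_uncurry_pw t
  unfold dalWeight Function.uncurry at *
  fun_prop

theorem sq_mul_sq_div_rpow_mul_sq_mul_rpow {y κ p : ℝ} (hy : 0 ≤ y) (hκ : 0 ≤ κ) (hp : 0 < p)
    (δ : ℝ) :
    (y ^ 2 * κ ^ 2 / p) ^ (1 / 2 - δ) * (y ^ 2 * p) ^ δ
      = y * κ ^ (1 - 2 * δ) * p ^ (2 * δ - 1 / 2) := by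
  have sq_rpow {x : ℝ} (hx : 0 ≤ x) (r : ℝ) : (x ^ 2) ^ r = x ^ (2 * r) := by
    rw [← Real.rpow_two, ← Real.rpow_mul hx]
  have hy' : y ^ (1 - 2 * δ) * y ^ (2 * δ) = y := by
    rw [← Real.rpow_add' hy (by norm_num), sub_add_cancel, Real.rpow_one]
  have hp' : p ^ δ / p ^ (1 / 2 - δ) = p ^ (2 * δ - 1 / 2) := by
    rw [← Real.rpow_sub hp]; ring_nf
  rw [Real.div_rpow (by positivity) hp.le, Real.mul_rpow (by positivity) (by positivity),
    Real.mul_rpow (by positivity) hp.le, sq_rpow hy, sq_rpow hκ, sq_rpow hy, ← hp',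
    show 2 * (1 / 2 - δ) = 1 - 2 * δ by ring]
  linear_combination κ ^ (1 - 2 * δ) * (p ^ δ / p ^ (1 / 2 - δ)) * hy'

theorem dtaWeight_rpow_mul_dalWeight_rpow {μ k : ℝ} (hμ : 0 ≤ μ) (hk : k ≠ 0) (t m η δ : ℝ) :
    dtaWeight t μ m k η ^ (1 / 2 - δ) * dalWeight t μ m k η ^ δ
      = jap k ^ m * Aw μ k * |η - k * t| * |k| ^ (1 - 2 * δ) * pw t k η ^ (2 * δ - 1 / 2) := by
  have hj := jap_pos k
  have hA := Aw_nonneg hμ k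
  rw [← sq_mul_sq_div_rpow_mul_sq_mul_rpow (by positivity) (abs_nonneg k) (pw_pos hk t η),
    dtaWeight, dalWeight]
  simp only [mul_pow, sq_abs, mul_comm 2 m, Real.rpow_mul hj.le, Real.rpow_two]
  ring_nf

theorem min_rpow_one_le_rpow {x a b : ℝ} (hx : 0 < x) (hb : 0 ≤ b) (hab : b ≤ a) :
    min (x ^ a) 1 ≤ x ^ b := by
  rcases le_total x 1 with h | h
  · exact (min_le_left _ _).trans (Real.rpow_le_rpow_of_exponent_ge hx h hab)
  · exact (min_le_right _ _).trans (Real.one_le_rpow h hb)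

theorem abs_rpow_two_thirds_eq {μ k : ℝ} (hμ : 0 < μ) (hk : μ ≤ |k|) :
    |k| ^ ((2 : ℝ) / 3) = μ ^ (-(1 / 3 : ℝ)) * Aw μ k * |k| := by
  have hκ : 0 < |k| := hμ.trans_le hk
  rw [Aw, if_neg hk.not_gt, ← mul_assoc, ← Real.rpow_add hμ, mul_assoc, ← Real.rpow_add_one hκ.ne']
  norm_num

theorem highFreqWeight_le {δ μ : ℝ} (hδ : δ ∈ Set.Icc (0 : ℝ) (1 / 8)) (hμ : 0 < μ)
    (t m k η : ℝ) :
    highFreqWeight t μ m k η ≤ μ ^ (-(1 / 3 : ℝ)) * pwKernel (1 + 8 * δ) t k η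
      * (dtaWeight t μ m k η ^ (1 / 2 - δ) * dalWeight t μ m k η ^ δ) := by
  obtain ⟨hδ₀, hδ₁⟩ := hδ
  have hK := pwKernel_nonneg (1 + 8 * δ) t k η
  have hf := dtaWeight_nonneg t μ m k η
  have hg := dalWeight_nonneg t μ m k η
  by_cases hkμ : μ ≤ |k|
  swap
  · rw [highFreqWeight, if_neg hkμ]
    simp only [zero_mul]
    positivity
  have hκ : 0 < |k| := hμ.trans_le hkμ
  have hk : k ≠ 0 := abs_pos.mp hκ
  have hp := pw_pos hk t η
  have hj := jap_pos k
  have hA := Aw_nonneg hμ.le k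
  have hk_pow : |k| ^ (2 * δ) * |k| = |k| ^ (4 * δ) * |k| ^ (1 - 2 * δ) := by
    rw [← Real.rpow_add_one hκ.ne', ← Real.rpow_add hκ]; ring_nf
  have hp_pow : pw t k η ^ (-(3 : ℝ) / 4)
      = pw t k η ^ (-(1 + 8 * δ) / 4) * pw t k η ^ (2 * δ - 1 / 2) := by
    rw [← Real.rpow_add hp]; ring_nf
  calc highFreqWeight t μ m k η
      = μ ^ (-(1 / 3 : ℝ)) * (jap k ^ m * Aw μ k * |η - k * t|)
          * (min (|k| ^ ((1 : ℝ) / 4)) 1 * |k|) * pw t k η ^ (-(3 : ℝ) / 4) := by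
        rw [highFreqWeight, if_pos hkμ, abs_rpow_two_thirds_eq hμ hkμ]; ring
    _ ≤ μ ^ (-(1 / 3 : ℝ)) * (jap k ^ m * Aw μ k * |η - k * t|)
          * (|k| ^ (2 * δ) * |k|) * pw t k η ^ (-(3 : ℝ) / 4) := by
        gcongr
        exact min_rpow_one_le_rpow hκ (by linarith) (by linarith)
    _ = μ ^ (-(1 / 3 : ℝ)) * pwKernel (1 + 8 * δ) t k η
          * (dtaWeight t μ m k η ^ (1 / 2 - δ) * dalWeight t μ m k η ^ δ) := by
        rw [dtaWeight_rpow_mul_dalWeight_rpow hμ.le hk, pwKernel, hk_pow, hp_pow,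
          show (1 + 8 * δ - 1) / 2 = 4 * δ by ring]
        ring

theorem Dta_eq_lintegral_quadDensity (t μ m : ℝ) (Z : ℝ × ℝ → ℂ) :
    Dta t μ m Z = ∫⁻ k, ∫⁻ η, quadDensity (dtaWeight t μ m) Z k η := rfl

theorem Dal_eq_ofReal_mul_lintegral_quadDensity (t μ m : ℝ) (Z : ℝ × ℝ → ℂ) :
    Dal t μ m Z = ENNReal.ofReal μ * ∫⁻ k, ∫⁻ η, quadDensity (dalWeight t μ m) Z k η := rfl

theorem ofReal_rpow_neg_mul_Dal_rpow {δ μ : ℝ} (hδ : 0 ≤ δ) (hμ : 0 < μ) (t m : ℝ)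
    (Z : ℝ × ℝ → ℂ) :
    ENNReal.ofReal (μ ^ (-δ)) * Dal t μ m Z ^ δ
      = (∫⁻ k, ∫⁻ η, quadDensity (dalWeight t μ m) Z k η) ^ δ := by
  rw [Dal_eq_ofReal_mul_lintegral_quadDensity, ENNReal.mul_rpow_of_nonneg _ _ hδ, ← mul_assoc,
    ENNReal.ofReal_rpow_of_pos hμ, ← ENNReal.ofReal_mul (by positivity), ← Real.rpow_add hμ,
    neg_add_cancel, Real.rpow_zero, ENNReal.ofReal_one, one_mul]

theorem L2L1n_highFreqWeight_le {δ μ : ℝ} (hδ : δ ∈ Set.Icc (0 : ℝ) (1 / 8)) (hμ : 0 < μ)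
    (t m : ℝ) {Z : ℝ × ℝ → ℂ} (hZ : Measurable Z) :
    L2L1n (highFreqWeight t μ m) Z
      ≤ (∫⁻ x, ENNReal.ofReal (jap x ^ (-(1 + 8 * δ)))) ^ ((1 : ℝ) / 2) *
          (ENNReal.ofReal (μ ^ (-(1 / 3 : ℝ))) *
            (ENNReal.ofReal (μ ^ (-δ)) * Dal t μ m Z ^ δ * Dta t μ m Z ^ ((1 : ℝ) / 2 - δ))) := by
  have hμ' : 0 ≤ μ ^ (-(1 / 3 : ℝ)) := by positivity
  have kernel_norm : ∀ᵐ k : ℝ, (∫⁻ η, ENNReal.ofReal (μ ^ (-(1 / 3 : ℝ))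
      * pwKernel (1 + 8 * δ) t k η) ^ (2 : ℝ)) ^ ((1 : ℝ) / 2)
      ≤ ENNReal.ofReal (μ ^ (-(1 / 3 : ℝ)))
        * (∫⁻ x, ENNReal.ofReal (jap x ^ (-(1 + 8 * δ)))) ^ ((1 : ℝ) / 2) := by
    filter_upwards [Measure.ae_ne volume 0] with k hk
    exact (lintegral_ofReal_mul_pwKernel_rpow_two hμ' hk _ t).le
  have interpolation := L2L1n_le_mul_lintegral_quadDensity_rpow
    (fun k η => mul_nonneg hμ' (pwKernel_nonneg _ t k η)) (dtaWeight_nonneg t μ m)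
    (dalWeight_nonneg t μ m) (fun k => (measurable_pwKernel _ t k).const_mul _)
    (measurable_uncurry_dtaWeight t μ m) (measurable_uncurry_dalWeight t μ m)
    (by linarith [hδ.2]) hδ.1 (sub_add_cancel _ _) (highFreqWeight_le hδ hμ t m) kernel_norm hZ
  rw [← Dta_eq_lintegral_quadDensity, ← ofReal_rpow_neg_mul_Dal_rpow hδ.1 hμ] at interpolation
  exact interpolation.trans_eq (by ring)

theorem stmt17_general {δ : ℝ} (hδ : δ ∈ Set.Ioc (0 : ℝ) (1 / 8)) :
    ∃ C : ℝ, 0 < C ∧ ∀ m t μ : ℝ, 0 < μ → ∀ Z : ℝ × ℝ → ℂ, Measurable Z →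
      L2L1n (highFreqWeight t μ m) Z
        ≤ ENNReal.ofReal C * (ENNReal.ofReal (μ ^ (-(1 / 3 : ℝ))) *
            (ENNReal.ofReal (μ ^ (-δ)) * Dal t μ m Z ^ δ
              * Dta t μ m Z ^ ((1 : ℝ) / 2 - δ))) := by
  have hJ : (∫⁻ x, ENNReal.ofReal (jap x ^ (-(1 + 8 * δ)))) ^ ((1 : ℝ) / 2) < ∞ :=
    ENNReal.rpow_lt_top_of_nonneg one_half_pos.le
      (lintegral_jap_rpow_neg_lt_top (by linarith [hδ.1])).ne
  obtain ⟨C, hJC, -⟩ := ENNReal.lt_iff_exists_nnreal_btwn.mp hJ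
  refine ⟨C, NNReal.coe_pos.mpr (ENNReal.coe_pos.mp (pos_of_gt hJC)), fun m t μ hμ Z hZ => ?_⟩
  rw [ENNReal.ofReal_coe_nnreal]
  exact (L2L1n_highFreqWeight_le (Set.Ioc_subset_Icc_self hδ) hμ t m hZ).trans (by gcongr)

/-- high-frequency `D_{τα}` interpolation lemma: there is
`C = C(m,δ)` such that for all `t`, `μ ∈ (0,1)` and measurable `Z`,
`‖1_{|k|≥μ} ⟨k⟩^m min(|k|^{1/4},1) |k|^{2/3} |η−kt| p^{−3/4} Z‖_{L²_kL¹_η}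
  ≤ C μ^{−1/3}(D_{τα}^{1/2} + μ^{−δ}D_α^δ D_{τα}^{1/2−δ})`. -/
theorem stmt17 (m δ : ℝ) (hm : 0 < m) (hδ : δ ∈ Set.Ioo (0 : ℝ) (1 / 12)) :
    ∃ C : ℝ, 0 < C ∧
      ∀ (t μ : ℝ), μ ∈ Set.Ioo (0 : ℝ) 1 →
        ∀ Z : ℝ × ℝ → ℂ, Measurable Z →
          L2L1n (fun k η =>
              (if μ ≤ |k| then 1 else 0) * jap k ^ m * min (|k| ^ ((1 : ℝ) / 4)) 1
                * |k| ^ ((2 : ℝ) / 3) * |η - k * t| * pw t k η ^ (-(3 : ℝ) / 4)) Z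
            ≤ ENNReal.ofReal C *
                (ENNReal.ofReal (μ ^ (-(1 / 3 : ℝ))) *
                  (Dta t μ m Z ^ ((1 : ℝ) / 2)
                    + ENNReal.ofReal (μ ^ (-δ)) * Dal t μ m Z ^ δ
                        * Dta t μ m Z ^ ((1 : ℝ) / 2 - δ))) := by
  obtain ⟨C, hC, h⟩ := stmt17_general (Set.Ioo_subset_Ioc_self.trans
    (Set.Ioc_subset_Ioc_right (by norm_num)) hδ)
  exact ⟨C, hC, fun t μ hμ Z hZ => (h m t μ hμ.1 Z hZ).trans (by gcongr; exact le_add_self)⟩
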